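/- Under the setting of the PIPG iteration (P symmetric positive semidefinite, D nonempty closed convex, K nonempty closed convex cone, step size α satisfying 0 < α ≤ (8 − 4/γ)/(√(λ² + 16ν²) + λ) for some γ ∈ (1/2, 1), λ ≥ ‖P‖, ν ≥ ‖H‖), let w̄ = lim_{j→∞}(w^j − w^{j−1}) be the limit of consecutive differences of the dual PIPG iterates. If ‖w̄‖ > 0, then inf_{z∈D} ⟨H z − g, w̄⟩ > 0 and sup_{y∈K} ⟨y, w̄⟩ = 0; in particular, the hyperplane {y | ⟨w̄, y⟩ = 0} separates the cone K from the set {H z − g | z ∈ D}, so there is no z ∈ D with H z − g ∈ K. -/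

import Mathlib

open scoped RealInnerProductSpace
open Filter Topology Metric ContinuousLinearMap

/-- Projection onto a set: the unique nearest point, when it exists
(it exists and is unique for nonempty closed convex sets in Euclidean space). -/
noncomputable def proj {E : Type*} [NormedAddCommGroup E] [InnerProductSpace ℝ E]
    (S : Set E) (x : E) : E :=
  open Classical in
  if h : ∃ y, y ∈ S ∧ ∀ z ∈ S, ‖x - y‖ ≤ ‖x - z‖ then h.choose else 0

/-- The polar cone `K° = {w | ⟪w, y⟫ ≤ 0 for all y ∈ K}`. -/
def polarCone {E : Type*} [NormedAddCommGroup E] [InnerProductSpace ℝ E]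
    (K : Set E) : Set E := {w | ∀ y ∈ K, ⟪w, y⟫ ≤ 0}

/-- The recession cone `rec D = {y | y + z ∈ D for all z ∈ D}`. -/
def recCone {E : Type*} [NormedAddCommGroup E] (D : Set E) : Set E :=
  {y | ∀ z ∈ D, y + z ∈ D}

/-- The normal cone of `D` at `z`: `N_D(z) = {y | ⟪y, z' - z⟫ ≤ 0 for all z' ∈ D}`. -/
def normalCone {E : Type*} [NormedAddCommGroup E] [InnerProductSpace ℝ E]
    (D : Set E) (z : E) : Set E := {y | ∀ z' ∈ D, ⟪y, z' - z⟫ ≤ 0}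

/-!
For `(α‖H‖)² + α‖P‖/2 < 1`, PIPG acts on the pairs `(z j, w (j + 1))` as an averaged map with
respect to the metric `‖a‖² + ‖b‖² - 2α⟪H a, b⟫` on `E × F`. Consecutive differences of an orbit of
an averaged map converge strongly even without fixed points: their norms decrease to some `r`,
distances grow at least like `L * r` over `L` steps, and uniform convexity of the Hilbert norm
forces the differences to be Cauchy. So the primal differences converge as well, to some `z̄`.
Dividing the variational inequalities of the two projections by `j` or `j²` and letting `j → ∞`
gives `w̄ ∈ K°`, `H z̄ ∈ K°°`, `⟪w̄, H z̄⟫ = 0`, `P z̄ = 0`, `z̄ ∈ rec D`, and finally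
`‖w̄‖² / α ≤ ⟪H y - g, w̄⟫` for all `y ∈ D`.
-/
section NonexpansiveOrbit

variable {E : Type*} [SeminormedAddCommGroup E]

/-- The sequence `x` behaves like an orbit `x (i + 1) = T (x i)` of a nonexpansive map `T`, as far
as its own terms can tell; the map itself never enters. -/
def IsNonexpansiveOrbit (x : ℕ → E) : Prop :=
  ∀ i j, ‖x (i + 1) - x (j + 1)‖ ≤ ‖x i - x j‖

namespace IsNonexpansiveOrbit

variable {x : ℕ → E}

lemma norm_add_sub_add_le (hx : IsNonexpansiveOrbit x) (i j k : ℕ) :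
    ‖x (i + k) - x (j + k)‖ ≤ ‖x i - x j‖ := by
  induction k with
  | zero => rfl
  | succ k ih => exact (hx (i + k) (j + k)).trans ih

lemma antitone_norm_succ_sub (hx : IsNonexpansiveOrbit x) :
    Antitone fun i => ‖x (i + 1) - x i‖ :=
  antitone_nat_of_succ_le fun i => hx (i + 1) i

lemma exists_tendsto_norm_succ_sub (hx : IsNonexpansiveOrbit x) :
    ∃ r, Tendsto (fun i => ‖x (i + 1) - x i‖) atTop (𝓝 r) :=
  ⟨_, tendsto_atTop_ciInf hx.antitone_norm_succ_sub ⟨0, by rintro _ ⟨i, rfl⟩; exact norm_nonneg _⟩⟩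

lemma norm_add_sub_le (hx : IsNonexpansiveOrbit x) (m l : ℕ) :
    ‖x (m + l) - x m‖ ≤ l * ‖x (m + 1) - x m‖ := by
  rw [← dist_eq_norm', ← nsmul_eq_mul]
  convert dist_le_Ico_sum_of_dist_le (f := x) (d := fun _ => ‖x (m + 1) - x m‖)
    (Nat.le_add_right m l) fun hk _ => ?_
  · simp
  · rw [dist_eq_norm']
    exact hx.antitone_norm_succ_sub hk

lemma two_mul_norm_sum_le (hx : IsNonexpansiveOrbit x) (m L : ℕ) :
    2 * ‖∑ l ∈ Finset.range L, (x (m + l + 1) - x m)‖ ≤ L * (L + 1) * ‖x (m + 1) - x m‖ := by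
  induction L with
  | zero => simp
  | succ L ih =>
    rw [Finset.sum_range_succ]
    have h_add := norm_add_le (∑ l ∈ Finset.range L, (x (m + l + 1) - x m)) (x (m + L + 1) - x m)
    have h_last := hx.norm_add_sub_le m (L + 1)
    rw [← add_assoc] at h_last
    push_cast at h_last ⊢
    linarith

lemma norm_sum_sub_sum_le (hx : IsNonexpansiveOrbit x) (i j L : ℕ) :
    ‖∑ l ∈ Finset.range L, (x (j + l + 1) - x j) - ∑ l ∈ Finset.range L, (x (i + l + 1) - x i)‖
      ≤ L * (2 * ‖x j - x i‖) := by
  rw [← Finset.sum_sub_distrib]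
  refine (norm_sum_le_of_le (n := fun _ => 2 * ‖x j - x i‖) _ fun l _ => ?_).trans_eq (by simp)
  calc ‖x (j + l + 1) - x j - (x (i + l + 1) - x i)‖
      = ‖x (j + (l + 1)) - x (i + (l + 1)) - (x j - x i)‖ := by
        rw [sub_sub_sub_comm]; rfl
    _ ≤ ‖x (j + (l + 1)) - x (i + (l + 1))‖ + ‖x j - x i‖ := norm_sub_le _ _
    _ ≤ 2 * ‖x j - x i‖ := by linarith [hx.norm_add_sub_add_le j i (l + 1)]

end IsNonexpansiveOrbit

lemma tendsto_add_sub_sub_smul_of_tendsto_succ_sub [NormedSpace ℝ E] {x : ℕ → E}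
    (h : Tendsto (fun i => (x (i + 2) - x (i + 1)) - (x (i + 1) - x i)) atTop (𝓝 0)) (L : ℕ) :
    Tendsto (fun i => x (i + L) - x i - (L : ℝ) • (x (i + 1) - x i)) atTop (𝓝 0) := by
  have h_shift (k : ℕ) :
      Tendsto (fun i => (x (i + k + 1) - x (i + k)) - (x (i + 1) - x i)) atTop (𝓝 0) := by
    induction k with
    | zero => simpa using tendsto_const_nhds
    | succ k ih =>
      have := ((tendsto_add_atTop_iff_nat k).2 h).add ih
      rw [add_zero] at this
      refine this.congr fun i => ?_
      rw [← add_assoc i k 1]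
      abel
  induction L with
  | zero => simpa using tendsto_const_nhds
  | succ L ih =>
    have := ih.add (h_shift L)
    rw [add_zero] at this
    refine this.congr fun i => ?_
    rw [← add_assoc i L 1]
    push_cast
    module

namespace IsNonexpansiveOrbit

variable {x : ℕ → E} {r : ℝ}

lemma mul_le_norm_add_sub [NormedSpace ℝ E] (hx : IsNonexpansiveOrbit x)
    (hreg : Tendsto (fun i => (x (i + 2) - x (i + 1)) - (x (i + 1) - x i)) atTop (𝓝 0))
    (hr : Tendsto (fun i => ‖x (i + 1) - x i‖) atTop (𝓝 r)) (j L : ℕ) :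
    L * r ≤ ‖x (j + L) - x j‖ := by
  have h_smul : Tendsto (fun i => ‖(L : ℝ) • (x (i + 1) - x i)‖) atTop (𝓝 (L * r)) := by
    simpa only [norm_smul, Real.norm_natCast] using hr.const_mul (L : ℝ)
  have h_sub : Tendsto (fun i => ‖x (i + L) - x i‖ - ‖(L : ℝ) • (x (i + 1) - x i)‖)
      atTop (𝓝 0) :=
    squeeze_zero_norm (fun i => abs_norm_sub_norm_le _ _)
      (tendsto_zero_iff_norm_tendsto_zero.1 (tendsto_add_sub_sub_smul_of_tendsto_succ_sub hreg L))
  have h_lim : Tendsto (fun i => ‖x (i + L) - x i‖) atTop (𝓝 (L * r)) := by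
    simpa only [sub_add_cancel, zero_add] using h_sub.add h_smul
  refine le_of_tendsto h_lim ?_
  filter_upwards [eventually_ge_atTop j] with i hi
  obtain ⟨k, rfl⟩ := Nat.exists_eq_add_of_le hi
  rw [add_right_comm]
  exact hx.norm_add_sub_add_le (j + L) j k

variable [InnerProductSpace ℝ E]

lemma norm_add_sub_sq_le (hx : IsNonexpansiveOrbit x) (j L : ℕ) :
    ‖x (j + L) - x j‖ ^ 2 ≤
      2 * ⟪x (j + 1) - x j, ∑ l ∈ Finset.range L, (x (j + l + 1) - x j)⟫ := by
  induction L with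
  | zero => simp
  | succ L ih =>
    rw [Finset.sum_range_succ, inner_add_right, ← add_assoc j L 1]
    have h_step : ‖(x (j + L + 1) - x j) - (x (j + 1) - x j)‖ ^ 2 ≤ ‖x (j + L) - x j‖ ^ 2 := by
      rw [sub_sub_sub_cancel_right]
      gcongr
      exact hx (j + L) j
    rw [norm_sub_sq_real, real_inner_comm] at h_step
    linarith [sq_nonneg ‖x (j + 1) - x j‖]

lemma mul_sq_le_two_mul_inner_sum (hx : IsNonexpansiveOrbit x)
    (hreg : Tendsto (fun i => (x (i + 2) - x (i + 1)) - (x (i + 1) - x i)) atTop (𝓝 0))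
    (hr : Tendsto (fun i => ‖x (i + 1) - x i‖) atTop (𝓝 r)) (m j L : ℕ) :
    (L * r) ^ 2 ≤ 2 * ⟪x (j + 1) - x j, ∑ l ∈ Finset.range L, (x (m + l + 1) - x m)⟫
      + L * (4 * ‖x (j + 1) - x j‖ * ‖x j - x m‖) := by
  have hr0 : 0 ≤ r := ge_of_tendsto' hr fun i => norm_nonneg _
  have h_growth : (L * r) ^ 2 ≤ ‖x (j + L) - x j‖ ^ 2 := by
    gcongr
    exact hx.mul_le_norm_add_sub hreg hr j L
  have h_base := hx.norm_add_sub_sq_le j L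
  have h_diff := real_inner_le_norm (x (j + 1) - x j)
    (∑ l ∈ Finset.range L, (x (j + l + 1) - x j) - ∑ l ∈ Finset.range L, (x (m + l + 1) - x m))
  rw [inner_sub_right] at h_diff
  have h_sum := mul_le_mul_of_nonneg_left (hx.norm_sum_sub_sum_le m j L)
    (norm_nonneg (x (j + 1) - x j))
  linarith

lemma two_mul_sq_le_norm_add_mul_norm (hx : IsNonexpansiveOrbit x)
    (hreg : Tendsto (fun i => (x (i + 2) - x (i + 1)) - (x (i + 1) - x i)) atTop (𝓝 0))
    (hr : Tendsto (fun i => ‖x (i + 1) - x i‖) atTop (𝓝 r)) (m i j : ℕ) :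
    2 * r ^ 2 ≤ ‖(x (i + 1) - x i) + (x (j + 1) - x j)‖ * ‖x (m + 1) - x m‖ := by
  set A := ‖(x (i + 1) - x i) + (x (j + 1) - x j)‖ * ‖x (m + 1) - x m‖ with hA
  set C := 4 * ‖x (i + 1) - x i‖ * ‖x i - x m‖ + 4 * ‖x (j + 1) - x j‖ * ‖x j - x m‖ with hC
  have h_quad (L : ℕ) : 2 * (L * r) ^ 2 ≤ L * (L + 1) * A + L * C := by
    have hi := hx.mul_sq_le_two_mul_inner_sum hreg hr m i L
    have hj := hx.mul_sq_le_two_mul_inner_sum hreg hr m j L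
    have h_inner := real_inner_le_norm ((x (i + 1) - x i) + (x (j + 1) - x j))
      (∑ l ∈ Finset.range L, (x (m + l + 1) - x m))
    rw [inner_add_left] at h_inner
    have h_sum := mul_le_mul_of_nonneg_left (hx.two_mul_norm_sum_le m L)
      (norm_nonneg ((x (i + 1) - x i) + (x (j + 1) - x j)))
    rw [hA, hC]
    linarith
  -- `h_quad` divided by `L ^ 2`, in the limit `L → ∞`
  have h_lim : Tendsto (fun L : ℕ => A + (A + C) * (L : ℝ)⁻¹) atTop (𝓝 A) := by
    simpa using (tendsto_inv_atTop_nhds_zero_nat (𝕜 := ℝ)).const_mul (A + C) |>.const_add A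
  refine ge_of_tendsto h_lim ?_
  filter_upwards [eventually_gt_atTop 0] with L hL
  have : (0 : ℝ) < L := Nat.cast_pos.2 hL
  refine le_of_mul_le_mul_left (a := (L : ℝ) ^ 2) ?_ (by positivity)
  calc (L : ℝ) ^ 2 * (2 * r ^ 2) = 2 * (L * r) ^ 2 := by ring
    _ ≤ L * (L + 1) * A + L * C := h_quad L
    _ = (L : ℝ) ^ 2 * (A + (A + C) * (L : ℝ)⁻¹) := by field_simp; ring

lemma norm_succ_sub_sub_succ_sub_sq_le (hx : IsNonexpansiveOrbit x)
    (hreg : Tendsto (fun i => (x (i + 2) - x (i + 1)) - (x (i + 1) - x i)) atTop (𝓝 0))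
    (hr : Tendsto (fun i => ‖x (i + 1) - x i‖) atTop (𝓝 r)) {m i j : ℕ} (hi : m ≤ i)
    (hj : m ≤ j) :
    ‖(x (i + 1) - x i) - (x (j + 1) - x j)‖ ^ 2 ≤ 8 * (‖x (m + 1) - x m‖ ^ 2 - r ^ 2) := by
  have h_add := hx.two_mul_sq_le_norm_add_mul_norm hreg hr m i j
  have h_para := parallelogram_law_with_norm ℝ (x (i + 1) - x i) (x (j + 1) - x j)
  have hi' : ‖x (i + 1) - x i‖ ^ 2 ≤ ‖x (m + 1) - x m‖ ^ 2 := by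
    gcongr
    exact hx.antitone_norm_succ_sub hi
  have hj' : ‖x (j + 1) - x j‖ ^ 2 ≤ ‖x (m + 1) - x m‖ ^ 2 := by
    gcongr
    exact hx.antitone_norm_succ_sub hj
  linarith [sq_nonneg (‖(x (i + 1) - x i) + (x (j + 1) - x j)‖ - 2 * ‖x (m + 1) - x m‖)]

theorem cauchySeq_succ_sub (hx : IsNonexpansiveOrbit x)
    (hreg : Tendsto (fun i => (x (i + 2) - x (i + 1)) - (x (i + 1) - x i)) atTop (𝓝 0)) :
    CauchySeq fun i => x (i + 1) - x i := by
  obtain ⟨r, hr⟩ := hx.exists_tendsto_norm_succ_sub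
  have h_bound : Tendsto (fun m => √(8 * (‖x (m + 1) - x m‖ ^ 2 - r ^ 2))) atTop (𝓝 0) := by
    have := (((hr.pow 2).sub_const (r ^ 2)).const_mul 8).sqrt
    rwa [sub_self, mul_zero, Real.sqrt_zero] at this
  refine cauchySeq_of_le_tendsto_0 _ (fun i j m hi hj => ?_) h_bound
  rw [dist_eq_norm]
  exact Real.le_sqrt_of_sq_le (hx.norm_succ_sub_sub_succ_sub_sq_le hreg hr hi hj)

end IsNonexpansiveOrbit

/-- The sequence `x` behaves like an orbit of an averaged map, as far as its own terms can tell: for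
a `θ`-averaged map the inequality holds with `c = (1 - θ) / θ`. -/
def IsAveragedOrbit (c : ℝ) (x : ℕ → E) : Prop :=
  ∀ i j, ‖x (i + 1) - x (j + 1)‖ ^ 2 + c * ‖(x (i + 1) - x i) - (x (j + 1) - x j)‖ ^ 2 ≤
    ‖x i - x j‖ ^ 2

namespace IsAveragedOrbit

variable {x : ℕ → E} {c : ℝ}

lemma isNonexpansiveOrbit (h : IsAveragedOrbit c x) (hc : 0 ≤ c) : IsNonexpansiveOrbit x :=
  fun i j => le_of_sq_le_sq ((le_add_of_nonneg_right (by positivity)).trans (h i j))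
    (norm_nonneg _)

lemma tendsto_succ_sub_sub_succ_sub (h : IsAveragedOrbit c x) (hc : 0 < c) :
    Tendsto (fun i => (x (i + 2) - x (i + 1)) - (x (i + 1) - x i)) atTop (𝓝 0) := by
  obtain ⟨r, hr⟩ := (h.isNonexpansiveOrbit hc.le).exists_tendsto_norm_succ_sub
  have h_drop : Tendsto (fun i => (‖x (i + 1) - x i‖ ^ 2 - ‖x (i + 2) - x (i + 1)‖ ^ 2) / c)
      atTop (𝓝 0) := by
    simpa using ((hr.pow 2).sub (((tendsto_add_atTop_iff_nat 1).2 hr).pow 2)).div_const c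
  have h_sq : Tendsto (fun i => ‖(x (i + 2) - x (i + 1)) - (x (i + 1) - x i)‖ ^ 2)
      atTop (𝓝 0) := by
    refine squeeze_zero (fun i => by positivity) (fun i => ?_) h_drop
    rw [le_div_iff₀' hc]
    linarith [h (i + 1) i]
  rw [tendsto_zero_iff_norm_tendsto_zero]
  simpa [Real.sqrt_sq (norm_nonneg _)] using h_sq.sqrt

theorem cauchySeq_succ_sub [InnerProductSpace ℝ E] (h : IsAveragedOrbit c x) (hc : 0 < c) :
    CauchySeq fun i => x (i + 1) - x i :=
  (h.isNonexpansiveOrbit hc.le).cauchySeq_succ_sub (h.tendsto_succ_sub_sub_succ_sub hc)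

end IsAveragedOrbit

end NonexpansiveOrbit

theorem tendsto_apply_succ_sub_sub_of_averaged {V : Type*} [AddCommGroup V] [Module ℝ V]
    {B : LinearMap.BilinForm ℝ V} (hB : B.IsPosSemidef) {x : ℕ → V} {c : ℝ} (hc : 0 < c)
    (h : ∀ i j, B (x (i + 1) - x (j + 1)) (x (i + 1) - x (j + 1))
      + c * B ((x (i + 1) - x i) - (x (j + 1) - x j)) ((x (i + 1) - x i) - (x (j + 1) - x j))
      ≤ B (x i - x j) (x i - x j)) :
    Tendsto (fun p : ℕ × ℕ => B ((x (p.1 + 1) - x p.1) - (x (p.2 + 1) - x p.2))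
      ((x (p.1 + 1) - x p.1) - (x (p.2 + 1) - x p.2))) atTop (𝓝 0) := by
  let core : PreInnerProductSpace.Core ℝ V :=
    { inner := fun x y => B x y
      conj_inner_symm := fun x y => hB.isSymm.eq y x
      re_inner_nonneg := fun x => hB.nonneg x
      add_left := fun x y z => by simp
      smul_left := fun x y r => by simp }
  let _ : SeminormedAddCommGroup V := InnerProductSpace.Core.toSeminormedAddCommGroup (c := core)
  let _ : InnerProductSpace ℝ V := InnerProductSpace.ofCore core
  have h_norm (y : V) : B y y = ‖y‖ ^ 2 := real_inner_self_eq_norm_sq y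
  simp only [h_norm] at h ⊢
  have h_cauchy : CauchySeq fun i => x (i + 1) - x i := IsAveragedOrbit.cauchySeq_succ_sub h hc
  simpa [dist_eq_norm] using (cauchySeq_iff_tendsto_dist_atTop_0.1 h_cauchy).pow 2

section Projection

variable {E : Type*} [NormedAddCommGroup E] [InnerProductSpace ℝ E] {S : Set E}

lemma proj_mem_and_norm_sub_proj_le {x : E} (h : ∃ y ∈ S, ∀ z ∈ S, ‖x - y‖ ≤ ‖x - z‖) :
    proj S x ∈ S ∧ ∀ z ∈ S, ‖x - proj S x‖ ≤ ‖x - z‖ := by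
  unfold _root_.proj
  rw [dif_pos h]
  exact h.choose_spec

variable [CompleteSpace E]

lemma exists_forall_norm_sub_le (hS : S.Nonempty) (hcl : IsClosed S) (hconv : Convex ℝ S)
    (x : E) : ∃ y ∈ S, ∀ z ∈ S, ‖x - y‖ ≤ ‖x - z‖ := by
  obtain ⟨y, hy, h_min⟩ := exists_norm_eq_iInf_of_complete_convex hS hcl.isComplete hconv x
  refine ⟨y, hy, fun z hz => ?_⟩
  rw [h_min]
  exact ciInf_le ⟨0, by rintro _ ⟨i, rfl⟩; exact norm_nonneg _⟩ (⟨z, hz⟩ : S)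

lemma proj_mem (hS : S.Nonempty) (hcl : IsClosed S) (hconv : Convex ℝ S) (x : E) :
    proj S x ∈ S :=
  (proj_mem_and_norm_sub_proj_le (exists_forall_norm_sub_le hS hcl hconv x)).1

lemma inner_sub_proj_sub_proj_nonpos (hS : S.Nonempty) (hcl : IsClosed S) (hconv : Convex ℝ S)
    (x : E) {y : E} (hy : y ∈ S) : ⟪x - proj S x, y - proj S x⟫ ≤ 0 := by
  obtain ⟨h_mem, h_min⟩ :=
    proj_mem_and_norm_sub_proj_le (exists_forall_norm_sub_le hS hcl hconv x)
  refine (norm_eq_iInf_iff_real_inner_le_zero hconv h_mem).1 (le_antisymm ?_ ?_) y hy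
  · have : Nonempty S := hS.to_subtype
    exact le_ciInf fun z => h_min z z.2
  · exact ciInf_le ⟨0, by rintro _ ⟨i, rfl⟩; exact norm_nonneg _⟩ (⟨_, h_mem⟩ : S)

end Projection

section PolarCone

variable {E : Type*} [NormedAddCommGroup E] [InnerProductSpace ℝ E] (K : Set E)

lemma isClosed_polarCone : IsClosed (polarCone K) := by
  simp only [polarCone, Set.ofPred_forall]
  exact isClosed_biInter fun y _ => isClosed_le (by fun_prop) continuous_const

lemma convex_polarCone : Convex ℝ (polarCone K) := by
  simp only [polarCone, Set.ofPred_forall]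
  exact convex_iInter₂ fun y _ => convex_halfSpace_le ((innerₗ E).flip y).isLinear 0

variable {K}

lemma zero_mem_polarCone : (0 : E) ∈ polarCone K := fun y _ => by simp

lemma smul_mem_polarCone {t : ℝ} (ht : 0 ≤ t) {w : E} (hw : w ∈ polarCone K) :
    t • w ∈ polarCone K := fun y hy => by
  rw [real_inner_smul_left]
  exact mul_nonpos_of_nonneg_of_nonpos ht (hw y hy)

variable [CompleteSpace E] (x : E)

lemma proj_polarCone_mem : proj (polarCone K) x ∈ polarCone K :=
  proj_mem ⟨0, zero_mem_polarCone⟩ (isClosed_polarCone K) (convex_polarCone K) x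

lemma inner_sub_proj_polarCone_self :
    ⟪x - proj (polarCone K) x, proj (polarCone K) x⟫ = 0 := by
  have h_var {y : E} := inner_sub_proj_sub_proj_nonpos ⟨0, zero_mem_polarCone⟩
    (isClosed_polarCone K) (convex_polarCone K) x (y := y)
  have h_zero := h_var zero_mem_polarCone
  have h_two := h_var (smul_mem_polarCone zero_le_two (proj_polarCone_mem x))
  rw [zero_sub, inner_neg_right] at h_zero
  rw [two_smul, add_sub_cancel_right] at h_two
  linarith

lemma inner_sub_proj_polarCone_nonpos {y : E} (hy : y ∈ polarCone K) :
    ⟪x - proj (polarCone K) x, y⟫ ≤ 0 := by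
  have h_var := inner_sub_proj_sub_proj_nonpos ⟨0, zero_mem_polarCone⟩
    (isClosed_polarCone K) (convex_polarCone K) x hy
  rwa [inner_sub_right, inner_sub_proj_polarCone_self, sub_zero] at h_var

end PolarCone

section PositiveOperator

variable {E : Type*} [NormedAddCommGroup E] [InnerProductSpace ℝ E] {P : E →L[ℝ] E}

lemma apply_eq_zero_of_inner_apply_self_eq_zero (hP : P.IsPositive) {x : E}
    (hx : ⟪P x, x⟫ = 0) : P x = 0 := by
  let B : LinearMap.BilinForm ℝ E := (innerₗ E).comp (P : E →ₗ[ℝ] E)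
  have hB : LinearMap.IsSymm B := ⟨fun a b => (hP.isSymmetric a b).trans (real_inner_comm _ _)⟩
  have h_ker := (B.apply_apply_same_eq_zero_iff hP.inner_nonneg_left hB (x := x)).1 hx
  exact inner_self_eq_zero (𝕜 := ℝ).1 (LinearMap.congr_fun h_ker (P x))

lemma neg_four_mul_inner_apply_le (hP : P.IsPositive) (a b : E) :
    -(4 * ⟪P a, b⟫) ≤ ‖P‖ * ‖b - a‖ ^ 2 := by
  have h_sum : 0 ≤ ⟪P (a + b), a + b⟫ := hP.inner_nonneg_left _
  have h_diff : ⟪P (b - a), b - a⟫ ≤ ‖P‖ * ‖b - a‖ ^ 2 := by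
    rw [sq, ← mul_assoc]
    exact (real_inner_le_norm _ _).trans (by gcongr; exact P.le_opNorm _)
  have h_symm : ⟪P b, a⟫ = ⟪P a, b⟫ := (hP.isSymmetric b a).trans (real_inner_comm _ _)
  simp only [map_add, map_sub, inner_add_left, inner_add_right, inner_sub_left, inner_sub_right,
    h_symm] at h_sum h_diff
  linarith

end PositiveOperator

section PipgForm

variable {E F : Type*} [NormedAddCommGroup E] [InnerProductSpace ℝ E]
  [NormedAddCommGroup F] [InnerProductSpace ℝ F] {α : ℝ} {P : E →L[ℝ] E} {H : E →L[ℝ] F}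

/-- The symmetric bilinear form with block matrix `[[1, -α H†], [-α H, 1]]` on `E × F`. Up to the
factor `α`, it is the metric in which PIPG with `P = 0` is a proximal-point iteration. -/
noncomputable def pipgForm (α : ℝ) (H : E →L[ℝ] F) : LinearMap.BilinForm ℝ (E × F) :=
  LinearMap.mk₂ ℝ
    (fun x y => ⟪x.1, y.1⟫ + ⟪x.2, y.2⟫ - α * (⟪H x.1, y.2⟫ + ⟪x.2, H y.1⟫))
    (fun x x' y => by simp only [Prod.fst_add, Prod.snd_add, map_add, inner_add_left]; ring)
    (fun c x y => by
      simp only [Prod.smul_fst, Prod.smul_snd, map_smul, real_inner_smul_left, smul_eq_mul]; ring)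
    (fun x y y' => by simp only [Prod.fst_add, Prod.snd_add, map_add, inner_add_right]; ring)
    (fun c x y => by
      simp only [Prod.smul_fst, Prod.smul_snd, map_smul, real_inner_smul_right, smul_eq_mul]; ring)

lemma pipgForm_apply (x y : E × F) : pipgForm α H x y =
    ⟪x.1, y.1⟫ + ⟪x.2, y.2⟫ - α * (⟪H x.1, y.2⟫ + ⟪x.2, H y.1⟫) := rfl

lemma isSymm_pipgForm : (pipgForm α H).IsSymm := ⟨fun x y => by
  simp only [pipgForm_apply]
  rw [real_inner_comm x.1, real_inner_comm x.2, real_inner_comm x.2, real_inner_comm (H x.1)]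
  ring⟩

lemma mul_norm_fst_sq_le_pipgForm_self (x : E × F) :
    (1 - (α * ‖H‖) ^ 2) * ‖x.1‖ ^ 2 ≤ pipgForm α H x x := by
  have h_form : pipgForm α H x x = ‖x.1‖ ^ 2 - ‖α • H x.1‖ ^ 2 + ‖x.2 - α • H x.1‖ ^ 2 := by
    rw [norm_sub_sq_real, inner_smul_right, pipgForm_apply, real_inner_comm x.2 (H x.1),
      real_inner_self_eq_norm_sq, real_inner_self_eq_norm_sq]
    ring
  have h_norm : ‖α • H x.1‖ ^ 2 ≤ (α * ‖H‖) ^ 2 * ‖x.1‖ ^ 2 := by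
    rw [norm_smul, mul_pow, mul_pow, mul_assoc, ← mul_pow ‖H‖, Real.norm_eq_abs, sq_abs]
    gcongr
    exact H.le_opNorm _
  linarith [sq_nonneg ‖x.2 - α • H x.1‖]

lemma isPosSemidef_pipgForm (h : (α * ‖H‖) ^ 2 ≤ 1) : (pipgForm α H).IsPosSemidef where
  eq := isSymm_pipgForm.eq
  nonneg x := (mul_nonneg (sub_nonneg.2 h) (sq_nonneg _)).trans
    (mul_norm_fst_sq_le_pipgForm_self x)

variable [CompleteSpace E] [CompleteSpace F]

lemma pipgForm_sub_le (hα : 0 ≤ α) (hP : P.IsPositive) {x y : E × F}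
    (h₁ : 0 ≤ ⟪x.1 - y.1 - α • (P x.1 + adjoint H x.2), y.1⟫)
    (h₂ : 0 ≤ ⟪x.2 - y.2 + α • H ((2 : ℝ) • y.1 - x.1), y.2⟫) :
    pipgForm α H (y - x) y ≤ α * ‖P‖ / 4 * ‖y.1 - x.1‖ ^ 2 := by
  have hP' := mul_le_mul_of_nonneg_left (neg_four_mul_inner_apply_le hP x.1 y.1) hα
  rw [pipgForm_apply, Prod.fst_sub, Prod.snd_sub]
  simp only [map_sub, map_smul, inner_sub_left, inner_add_left, real_inner_smul_left,
    adjoint_inner_left] at h₁ h₂ ⊢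
  rw [real_inner_comm (H y.1) y.2]
  linarith

lemma pipgForm_self_add_le (hα : 0 ≤ α) (hP : P.IsPositive) (hH : (α * ‖H‖) ^ 2 < 1) {x y : E × F}
    (h₁ : 0 ≤ ⟪x.1 - y.1 - α • (P x.1 + adjoint H x.2), y.1⟫)
    (h₂ : 0 ≤ ⟪x.2 - y.2 + α • H ((2 : ℝ) • y.1 - x.1), y.2⟫) :
    pipgForm α H y y + (1 - α * ‖P‖ / 2 / (1 - (α * ‖H‖) ^ 2)) * pipgForm α H (y - x) (y - x) ≤
      pipgForm α H x x := by
  have h_fst : ‖y.1 - x.1‖ ^ 2 ≤ pipgForm α H (y - x) (y - x) / (1 - (α * ‖H‖) ^ 2) := by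
    rw [le_div_iff₀' (sub_pos.2 hH)]
    exact mul_norm_fst_sq_le_pipgForm_self (y - x)
  have h_step := (pipgForm_sub_le hα hP h₁ h₂).trans
    (mul_le_mul_of_nonneg_left h_fst (by positivity))
  have h_polar : 2 * pipgForm α H (y - x) y =
      pipgForm α H y y + pipgForm α H (y - x) (y - x) - pipgForm α H x x := by
    simp only [map_sub, LinearMap.sub_apply, isSymm_pipgForm.eq x y]
    ring
  rw [sub_mul, one_mul]
  have : α * ‖P‖ / 2 / (1 - (α * ‖H‖) ^ 2) * pipgForm α H (y - x) (y - x) =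
    2 * (α * ‖P‖ / 4 * (pipgForm α H (y - x) (y - x) / (1 - (α * ‖H‖) ^ 2))) := by ring
  linarith

end PipgForm

lemma sq_mul_add_mul_div_two_lt_one {α γ lam ν : ℝ} (hγ : 0 < γ) (hγ1 : γ < 1) (hlam : 0 ≤ lam)
    (hα : 0 < α) (h : α ≤ (8 - 4 / γ) / (√(lam ^ 2 + 16 * ν ^ 2) + lam)) :
    (α * ν) ^ 2 + α * lam / 2 < 1 := by
  have hs_sq := Real.sq_sqrt (show 0 ≤ lam ^ 2 + 16 * ν ^ 2 by positivity)
  have hs : 0 ≤ √(lam ^ 2 + 16 * ν ^ 2) := Real.sqrt_nonneg _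
  set s := √(lam ^ 2 + 16 * ν ^ 2)
  have h_den : 0 < s + lam := by
    -- a zero denominator would make the bound on `α` read `α ≤ 0`, as `x / 0 = 0`
    refine (add_nonneg hs hlam).lt_of_ne fun h_zero => ?_
    rw [← h_zero, div_zero] at h
    exact h.not_gt hα
  have hγ4 : 4 < 4 / γ := by rw [lt_div_iff₀ hγ]; linarith
  have h_lin : α * s < 4 - α * lam := by
    rw [le_div_iff₀ h_den] at h
    linarith
  have h_sq : (α * s) ^ 2 < (4 - α * lam) ^ 2 := by gcongr
  rw [mul_pow, hs_sq] at h_sq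
  linarith

section Recession

variable {E : Type*} [NormedAddCommGroup E] [NormedSpace ℝ E] {x : ℕ → E} {l : E}

lemma tendsto_inv_smul_add_of_tendsto_succ_sub
    (h : Tendsto (fun j => x (j + 1) - x j) atTop (𝓝 l)) (k : ℕ) :
    Tendsto (fun j : ℕ => (j : ℝ)⁻¹ • x (j + k)) atTop (𝓝 l) := by
  have h_mean := ((tendsto_add_atTop_iff_nat k).2 h).cesaro_smul.add
    ((tendsto_inv_atTop_nhds_zero_nat (𝕜 := ℝ)).smul_const (x k))
  rw [zero_smul, add_zero] at h_mean
  refine h_mean.congr fun j => ?_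
  have h_sum := Finset.sum_range_sub (fun i => x (i + k)) j
  simp only [add_right_comm _ 1 k, zero_add] at h_sum
  rw [h_sum, ← smul_add, sub_add_cancel]

lemma mem_recCone_of_tendsto_inv_smul {D : Set E} (hcl : IsClosed D) (hconv : Convex ℝ D)
    (hx : ∀ j, x j ∈ D) (h : Tendsto (fun j : ℕ => (j : ℝ)⁻¹ • x j) atTop (𝓝 l)) :
    l ∈ recCone D := by
  intro y hy
  have h_comb : Tendsto (fun j : ℕ => (j : ℝ)⁻¹ • x j + (1 - (j : ℝ)⁻¹) • y) atTop
      (𝓝 (l + y)) := by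
    simpa using h.add (((tendsto_inv_atTop_nhds_zero_nat (𝕜 := ℝ)).const_sub 1).smul_const y)
  refine hcl.mem_of_tendsto h_comb ?_
  filter_upwards [eventually_ge_atTop 1] with j hj
  have hj1 : (j : ℝ)⁻¹ ≤ 1 := inv_le_one_of_one_le₀ (by exact_mod_cast hj)
  exact hconv (hx j) hy (by positivity) (sub_nonneg.2 hj1) (add_sub_cancel _ _)

end Recession

section Pipg

variable {E F : Type*} [NormedAddCommGroup E] [InnerProductSpace ℝ E] [CompleteSpace E]
  [NormedAddCommGroup F] [InnerProductSpace ℝ F] [CompleteSpace F]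

/-- The sequences `w`, `v`, `z` are generated by PIPG with step size `α` for the quadratic program
of minimizing `⟪z, P z⟫ / 2 + ⟪q, z⟫` over `z ∈ D` with `H z - g ∈ K`. -/
structure IsPIPG (α : ℝ) (P : E →L[ℝ] E) (q : E) (H : E →L[ℝ] F) (g : F) (D : Set E) (K : Set F)
    (w v : ℕ → F) (z : ℕ → E) : Prop where
  dual_succ (j : ℕ) : w (j + 1) = proj (polarCone K) (v j + α • (H (z j) - g))
  primal_succ (j : ℕ) :
    z (j + 1) = proj D (z j - α • (P (z j) + q + adjoint H (w (j + 1))))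
  extrapolation_succ (j : ℕ) : v (j + 1) = w (j + 1) + α • H (z (j + 1) - z j)

namespace IsPIPG

variable {α : ℝ} {P : E →L[ℝ] E} {q : E} {H : E →L[ℝ] F} {g : F} {D : Set E} {K : Set F}
  {w v : ℕ → F} {z : ℕ → E}

lemma dual_mem (h : IsPIPG α P q H g D K w v z) (j : ℕ) : w (j + 1) ∈ polarCone K := by
  rw [h.dual_succ]
  exact proj_polarCone_mem _

lemma dual_add_two (h : IsPIPG α P q H g D K w v z) (j : ℕ) :
    w (j + 2) = proj (polarCone K) (w (j + 1) + α • (H ((2 : ℝ) • z (j + 1) - z j) - g)) := by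
  rw [h.dual_succ (j + 1), h.extrapolation_succ]
  congr 1
  simp only [map_sub, map_smul]
  module

lemma inner_dual_residual_nonpos (h : IsPIPG α P q H g D K w v z) (j : ℕ) {y : F}
    (hy : y ∈ polarCone K) :
    ⟪w (j + 1) + α • (H ((2 : ℝ) • z (j + 1) - z j) - g) - w (j + 2), y⟫ ≤ 0 := by
  rw [h.dual_add_two]
  exact inner_sub_proj_polarCone_nonpos _ hy

lemma inner_dual_residual_self (h : IsPIPG α P q H g D K w v z) (j : ℕ) :
    ⟪w (j + 1) + α • (H ((2 : ℝ) • z (j + 1) - z j) - g) - w (j + 2), w (j + 2)⟫ = 0 := by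
  rw [h.dual_add_two]
  exact inner_sub_proj_polarCone_self _

lemma inner_dual_sub_nonneg (h : IsPIPG α P q H g D K w v z) (i j : ℕ) :
    0 ≤ ⟪(w (i + 1) - w (j + 1)) - (w (i + 2) - w (j + 2)) +
      α • H ((2 : ℝ) • (z (i + 1) - z (j + 1)) - (z i - z j)), w (i + 2) - w (j + 2)⟫ := by
  have h_eq : (w (i + 1) - w (j + 1)) - (w (i + 2) - w (j + 2)) +
      α • H ((2 : ℝ) • (z (i + 1) - z (j + 1)) - (z i - z j)) =
      (w (i + 1) + α • (H ((2 : ℝ) • z (i + 1) - z i) - g) - w (i + 2)) -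
      (w (j + 1) + α • (H ((2 : ℝ) • z (j + 1) - z j) - g) - w (j + 2)) := by
    simp only [map_sub, map_smul]
    module
  rw [h_eq, inner_sub_left, inner_sub_right, inner_sub_right]
  linarith [h.inner_dual_residual_self i, h.inner_dual_residual_self j,
    h.inner_dual_residual_nonpos i (h.dual_mem (j + 1)),
    h.inner_dual_residual_nonpos j (h.dual_mem (i + 1))]

section Primal

variable (hne : D.Nonempty) (hcl : IsClosed D) (hconv : Convex ℝ D)
include hne hcl hconv

lemma primal_mem (h : IsPIPG α P q H g D K w v z) (j : ℕ) : z (j + 1) ∈ D := by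
  rw [h.primal_succ]
  exact proj_mem hne hcl hconv _

lemma inner_primal_residual_nonpos (h : IsPIPG α P q H g D K w v z) (j : ℕ) {y : E}
    (hy : y ∈ D) :
    ⟪z j - α • (P (z j) + q + adjoint H (w (j + 1))) - z (j + 1), y - z (j + 1)⟫ ≤ 0 := by
  rw [h.primal_succ j]
  exact inner_sub_proj_sub_proj_nonpos hne hcl hconv _ hy

lemma inner_primal_sub_nonneg (h : IsPIPG α P q H g D K w v z) (i j : ℕ) :
    0 ≤ ⟪(z i - z j) - (z (i + 1) - z (j + 1)) -
      α • (P (z i - z j) + adjoint H (w (i + 1) - w (j + 1))), z (i + 1) - z (j + 1)⟫ := by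
  have h_eq : (z i - z j) - (z (i + 1) - z (j + 1)) -
      α • (P (z i - z j) + adjoint H (w (i + 1) - w (j + 1))) =
      (z i - α • (P (z i) + q + adjoint H (w (i + 1))) - z (i + 1)) -
      (z j - α • (P (z j) + q + adjoint H (w (j + 1))) - z (j + 1)) := by
    simp only [map_sub]
    module
  have hi := h.inner_primal_residual_nonpos hne hcl hconv i (h.primal_mem hne hcl hconv j)
  have hj := h.inner_primal_residual_nonpos hne hcl hconv j (h.primal_mem hne hcl hconv i)
  rw [← neg_sub (z (i + 1)) (z (j + 1)), inner_neg_right] at hi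
  rw [h_eq, inner_sub_left]
  linarith

theorem exists_tendsto_primal_succ_sub (h : IsPIPG α P q H g D K w v z) (hP : P.IsPositive)
    (hα : 0 ≤ α) (hαPH : (α * ‖H‖) ^ 2 + α * ‖P‖ / 2 < 1) :
    ∃ zbar, Tendsto (fun j => z (j + 1) - z j) atTop (𝓝 zbar) := by
  have hH : (α * ‖H‖) ^ 2 < 1 := (le_add_of_nonneg_right (by positivity)).trans_lt hαPH
  have hκ : 0 < 1 - (α * ‖H‖) ^ 2 := sub_pos.2 hH
  have hc : 0 < 1 - α * ‖P‖ / 2 / (1 - (α * ‖H‖) ^ 2) := by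
    rw [sub_pos, div_lt_one hκ]
    linarith
  let x (j : ℕ) : E × F := (z j, w (j + 1))
  have h_form := tendsto_apply_succ_sub_sub_of_averaged (isPosSemidef_pipgForm hH.le) (x := x) hc
    fun i j => by
      rw [sub_sub_sub_comm (x (i + 1))]
      exact pipgForm_self_add_le hα hP hH (h.inner_primal_sub_nonneg hne hcl hconv i j)
        (h.inner_dual_sub_nonneg i j)
  have h_sq : Tendsto (fun p : ℕ × ℕ => ‖(z (p.1 + 1) - z p.1) - (z (p.2 + 1) - z p.2)‖ ^ 2) atTop
      (𝓝 0) := by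
    have h_div := h_form.div_const (1 - (α * ‖H‖) ^ 2)
    rw [zero_div] at h_div
    refine squeeze_zero (fun _ => by positivity) (fun p => ?_) h_div
    rw [le_div_iff₀' hκ]
    exact mul_norm_fst_sq_le_pipgForm_self
      ((x (p.1 + 1) - x p.1) - (x (p.2 + 1) - x p.2))
  refine cauchySeq_tendsto_of_complete (cauchySeq_iff_tendsto_dist_atTop_0.2 ?_)
  simpa [dist_eq_norm, Real.sqrt_sq (norm_nonneg _)] using h_sq.sqrt

end Primal

section Limits

variable {zbar : E} {wbar : F}

lemma dual_limit_mem (h : IsPIPG α P q H g D K w v z)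
    (hwlim : Tendsto (fun j => w (j + 1) - w j) atTop (𝓝 wbar)) : wbar ∈ polarCone K :=
  (isClosed_polarCone K).mem_of_tendsto (tendsto_inv_smul_add_of_tendsto_succ_sub hwlim 1)
    (Eventually.of_forall fun j => smul_mem_polarCone (by positivity) (h.dual_mem j))

lemma inner_apply_primal_limit_nonpos (h : IsPIPG α P q H g D K w v z) (hα : 0 < α)
    (hzlim : Tendsto (fun j => z (j + 1) - z j) atTop (𝓝 zbar))
    (hwlim : Tendsto (fun j => w (j + 1) - w j) atTop (𝓝 wbar)) {y : F} (hy : y ∈ polarCone K) :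
    ⟪H zbar, y⟫ ≤ 0 := by
  have h_inv : Tendsto (fun j : ℕ => (j : ℝ)⁻¹) atTop (𝓝 0) := tendsto_inv_atTop_nhds_zero_nat
  have h_res : Tendsto (fun j : ℕ =>
      (j : ℝ)⁻¹ • (w (j + 1) + α • (H ((2 : ℝ) • z (j + 1) - z j) - g) - w (j + 2)))
      atTop (𝓝 (α • H zbar)) := by
    have hz₁ := tendsto_inv_smul_add_of_tendsto_succ_sub hzlim 1
    have := ((((H.continuous.tendsto _).comp hz₁).const_smul α).add ((h_inv.smul
      (((H.continuous.tendsto _).comp hzlim).sub_const g)).const_smul α)).sub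
      (h_inv.smul ((tendsto_add_atTop_iff_nat 1).2 hwlim))
    rw [zero_smul, smul_zero, zero_smul, add_zero, sub_zero] at this
    refine this.congr fun j => ?_
    simp only [Function.comp_apply, map_sub, map_smul, add_assoc j 1 1, one_add_one_eq_two]
    module
  have h_le := le_of_tendsto' (h_res.inner (𝕜 := ℝ) (tendsto_const_nhds (x := y))) fun j => by
    rw [real_inner_smul_left]
    exact mul_nonpos_of_nonneg_of_nonpos (by positivity) (h.inner_dual_residual_nonpos j hy)
  rw [real_inner_smul_left] at h_le
  exact nonpos_of_mul_nonpos_right h_le hα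

lemma tendsto_inv_mul_inner_dual_add_two (h : IsPIPG α P q H g D K w v z)
    (hzlim : Tendsto (fun j => z (j + 1) - z j) atTop (𝓝 zbar))
    (hwlim : Tendsto (fun j => w (j + 1) - w j) atTop (𝓝 wbar)) :
    Tendsto (fun j : ℕ => (j : ℝ)⁻¹ * (α * ⟪w (j + 2), H (z (j + 1))⟫)) atTop
      (𝓝 ⟪wbar, wbar - α • H zbar + α • g⟫) := by
  have h_inner := (tendsto_inv_smul_add_of_tendsto_succ_sub hwlim 2).inner (𝕜 := ℝ)
    ((((tendsto_add_atTop_iff_nat 1).2 hwlim).sub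
      (((H.continuous.tendsto _).comp hzlim).const_smul α)).add_const (α • g))
  refine h_inner.congr fun j => ?_
  have h_comp := h.inner_dual_residual_self j
  rw [real_inner_comm] at h_comp
  rw [real_inner_smul_left]
  simp only [Function.comp_apply, map_sub, map_smul, inner_sub_right, inner_add_right,
    real_inner_smul_right, add_assoc j 1 1, one_add_one_eq_two] at h_comp ⊢
  linear_combination (-(j : ℝ)⁻¹) * h_comp

lemma inner_dual_limit_apply_primal_limit (h : IsPIPG α P q H g D K w v z) (hα : α ≠ 0)
    (hzlim : Tendsto (fun j => z (j + 1) - z j) atTop (𝓝 zbar))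
    (hwlim : Tendsto (fun j => w (j + 1) - w j) atTop (𝓝 wbar)) : ⟪wbar, H zbar⟫ = 0 := by
  have h_zero := (tendsto_inv_atTop_nhds_zero_nat (𝕜 := ℝ)).mul
    (h.tendsto_inv_mul_inner_dual_add_two hzlim hwlim)
  rw [zero_mul] at h_zero
  have h_inner := ((tendsto_inv_smul_add_of_tendsto_succ_sub hwlim 2).inner (𝕜 := ℝ)
    ((H.continuous.tendsto _).comp
      (tendsto_inv_smul_add_of_tendsto_succ_sub hzlim 1))).const_mul α
  refine (mul_eq_zero.1 (tendsto_nhds_unique h_inner (h_zero.congr fun j => ?_))).resolve_left hα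
  rw [Function.comp_apply, map_smul, real_inner_smul_left, real_inner_smul_right]
  ring

lemma tendsto_inv_mul_inner_dual_succ (h : IsPIPG α P q H g D K w v z) (hα : α ≠ 0)
    (hzlim : Tendsto (fun j => z (j + 1) - z j) atTop (𝓝 zbar))
    (hwlim : Tendsto (fun j => w (j + 1) - w j) atTop (𝓝 wbar)) :
    Tendsto (fun j : ℕ => (j : ℝ)⁻¹ * (α * ⟪w (j + 1), H (z (j + 1))⟫)) atTop
      (𝓝 (‖wbar‖ ^ 2 + α * ⟪wbar, g⟫)) := by
  have h_orth := h.inner_dual_limit_apply_primal_limit hα hzlim hwlim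
  have h_sub := (h.tendsto_inv_mul_inner_dual_add_two hzlim hwlim).sub
    ((((tendsto_add_atTop_iff_nat 1).2 hwlim).inner (𝕜 := ℝ) ((H.continuous.tendsto _).comp
      (tendsto_inv_smul_add_of_tendsto_succ_sub hzlim 1))).const_mul α)
  rw [inner_add_right, inner_sub_right, real_inner_smul_right, real_inner_smul_right, h_orth,
    mul_zero, sub_zero, sub_zero, real_inner_self_eq_norm_sq] at h_sub
  refine h_sub.congr fun j => ?_
  rw [Function.comp_apply, map_smul, real_inner_smul_right, inner_sub_left]
  ring

variable (hne : D.Nonempty) (hcl : IsClosed D) (hconv : Convex ℝ D)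
include hne hcl hconv

lemma apply_primal_limit_eq_zero (h : IsPIPG α P q H g D K w v z) (hP : P.IsPositive) (hα : 0 < α)
    (hzlim : Tendsto (fun j => z (j + 1) - z j) atTop (𝓝 zbar))
    (hwlim : Tendsto (fun j => w (j + 1) - w j) atTop (𝓝 wbar)) : P zbar = 0 := by
  obtain ⟨y, hy⟩ := hne
  have h_inv : Tendsto (fun j : ℕ => (j : ℝ)⁻¹) atTop (𝓝 0) := tendsto_inv_atTop_nhds_zero_nat
  have hz₀ := tendsto_inv_smul_add_of_tendsto_succ_sub hzlim 0
  have hz₁ := tendsto_inv_smul_add_of_tendsto_succ_sub hzlim 1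
  have hw₁ := tendsto_inv_smul_add_of_tendsto_succ_sub hwlim 1
  have h_res : Tendsto (fun j : ℕ =>
      (j : ℝ)⁻¹ • (z j - α • (P (z j) + q + adjoint H (w (j + 1))) - z (j + 1))) atTop
      (𝓝 (-(α • (P zbar + adjoint H wbar)))) := by
    have := ((h_inv.smul hzlim).add (((((P.continuous.tendsto _).comp hz₀).add
      (h_inv.smul_const q)).add (((adjoint H).continuous.tendsto _).comp hw₁)).const_smul α)).neg
    rw [zero_smul, zero_smul, zero_add, add_zero] at this
    refine this.congr fun j => ?_
    simp only [Function.comp_apply, map_smul, add_zero]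
    module
  have h_dir : Tendsto (fun j : ℕ => (j : ℝ)⁻¹ • (y - z (j + 1))) atTop (𝓝 (-zbar)) := by
    have := (h_inv.smul_const y).sub hz₁
    rw [zero_smul, zero_sub] at this
    exact this.congr fun j => (smul_sub _ _ _).symm
  have h_le := le_of_tendsto' (h_res.inner (𝕜 := ℝ) h_dir) (b := 0) fun j => by
    rw [real_inner_smul_left, real_inner_smul_right, ← mul_assoc]
    exact mul_nonpos_of_nonneg_of_nonpos (by positivity)
      (h.inner_primal_residual_nonpos ⟨y, hy⟩ hcl hconv j hy)
  rw [inner_neg_neg, real_inner_smul_left, inner_add_left, adjoint_inner_left,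
    h.inner_dual_limit_apply_primal_limit hα.ne' hzlim hwlim, add_zero] at h_le
  exact apply_eq_zero_of_inner_apply_self_eq_zero hP
    (le_antisymm (nonpos_of_mul_nonpos_right h_le hα) (hP.inner_nonneg_left _))

lemma inner_primal_limit_add_smul_nonneg (h : IsPIPG α P q H g D K w v z) (hP : P.IsPositive)
    (hα : 0 < α) (hzlim : Tendsto (fun j => z (j + 1) - z j) atTop (𝓝 zbar))
    (hwlim : Tendsto (fun j => w (j + 1) - w j) atTop (𝓝 wbar)) :
    0 ≤ ⟪zbar + α • q, zbar⟫ := by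
  have h_rec : zbar ∈ recCone D := mem_recCone_of_tendsto_inv_smul hcl hconv
    (h.primal_mem hne hcl hconv) (tendsto_inv_smul_add_of_tendsto_succ_sub hzlim 1)
  refine ge_of_tendsto' ((hzlim.add_const (α • q)).inner (𝕜 := ℝ) tendsto_const_nhds) fun j => ?_
  have h_var := h.inner_primal_residual_nonpos hne hcl hconv j
    (h_rec _ (h.primal_mem hne hcl hconv j))
  have h_polar := h.inner_apply_primal_limit_nonpos hα hzlim hwlim (h.dual_mem j)
  have hPz : ⟪P (z j), zbar⟫ = 0 := by
    rw [← coe_coe, hP.isSymmetric, coe_coe,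
      h.apply_primal_limit_eq_zero hne hcl hconv hP hα hzlim hwlim, inner_zero_right]
  rw [real_inner_comm] at h_polar
  simp only [add_sub_cancel_right, inner_sub_left, inner_add_left, real_inner_smul_left,
    adjoint_inner_left, hPz] at h_var ⊢
  linarith [mul_nonpos_of_nonneg_of_nonpos hα.le h_polar]

lemma inner_dual_apply_primal_le (h : IsPIPG α P q H g D K w v z) (hP : P.IsPositive) (hα : 0 ≤ α)
    (j : ℕ) {y : E} (hy : y ∈ D) :
    α * ⟪w (j + 1), H (z (j + 1))⟫ + α * ⟪P (z j), z (j + 1) - z j⟫ ≤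
      ⟪z (j + 1) - z j + α • q, y - z (j + 1)⟫ + α * (⟪P (z j), y⟫ + ⟪w (j + 1), H y⟫) := by
  have h_var := h.inner_primal_residual_nonpos hne hcl hconv j hy
  -- dropping this term, quadratic in `j`, leaves only terms that grow at most linearly
  have h_psd := mul_nonneg hα (hP.inner_nonneg_left (z j))
  simp only [inner_sub_left, inner_sub_right, inner_add_left, real_inner_smul_left,
    adjoint_inner_left] at h_var ⊢
  linarith

theorem norm_sq_div_le_inner_dual_limit (h : IsPIPG α P q H g D K w v z) (hP : P.IsPositive)
    (hα : 0 < α) (hzlim : Tendsto (fun j => z (j + 1) - z j) atTop (𝓝 zbar))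
    (hwlim : Tendsto (fun j => w (j + 1) - w j) atTop (𝓝 wbar)) {y : E} (hy : y ∈ D) :
    ‖wbar‖ ^ 2 / α ≤ ⟪H y - g, wbar⟫ := by
  have h_inv : Tendsto (fun j : ℕ => (j : ℝ)⁻¹) atTop (𝓝 0) := tendsto_inv_atTop_nhds_zero_nat
  have hPz : Tendsto (fun j : ℕ => P ((j : ℝ)⁻¹ • z (j + 0))) atTop (𝓝 0) := by
    rw [← h.apply_primal_limit_eq_zero hne hcl hconv hP hα hzlim hwlim]
    exact (P.continuous.tendsto _).comp (tendsto_inv_smul_add_of_tendsto_succ_sub hzlim 0)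
  have h_left := (h.tendsto_inv_mul_inner_dual_succ hα.ne' hzlim hwlim).add
    ((hPz.inner (𝕜 := ℝ) hzlim).const_mul α)
  have h_right := ((hzlim.add_const (α • q)).inner (𝕜 := ℝ) ((h_inv.smul_const y).sub
    (tendsto_inv_smul_add_of_tendsto_succ_sub hzlim 1))).add
    (((hPz.inner (𝕜 := ℝ) (tendsto_const_nhds (x := y))).add
      ((tendsto_inv_smul_add_of_tendsto_succ_sub hwlim 1).inner (𝕜 := ℝ)
        (tendsto_const_nhds (x := H y)))).const_mul α)
  have h_le := le_of_tendsto_of_tendsto' h_left h_right fun j => by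
    have h_scaled := mul_le_mul_of_nonneg_left
      (h.inner_dual_apply_primal_le hne hcl hconv hP hα.le j hy) (inv_nonneg.2 (Nat.cast_nonneg j))
    simp only [map_smul, ← smul_sub, real_inner_smul_left, real_inner_smul_right, add_zero]
    linarith
  have h_dir := h.inner_primal_limit_add_smul_nonneg hne hcl hconv hP hα hzlim hwlim
  rw [zero_smul, zero_sub, inner_neg_right, inner_zero_left, inner_zero_left, mul_zero, add_zero,
    zero_add] at h_le
  rw [div_le_iff₀' hα, real_inner_comm, inner_sub_right]
  linarith

end Limits

end IsPIPG

theorem stmt6_general {α : ℝ} {P : E →L[ℝ] E} {q : E} {H : E →L[ℝ] F} {g : F} {D : Set E}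
    {K : Set F} {w v : ℕ → F} {z : ℕ → E} {wbar : F} (hP : P.IsPositive) (hne : D.Nonempty)
    (hcl : IsClosed D) (hconv : Convex ℝ D) (hK : (0 : F) ∈ K)
    (h : IsPIPG α P q H g D K w v z) (hα : 0 < α) (hαPH : (α * ‖H‖) ^ 2 + α * ‖P‖ / 2 < 1)
    (hwlim : Tendsto (fun j => w (j + 1) - w j) atTop (𝓝 wbar)) (hwpos : 0 < ‖wbar‖) :
    0 < sInf {r : ℝ | ∃ zz ∈ D, r = ⟪H zz - g, wbar⟫} ∧
    sSup {r : ℝ | ∃ y ∈ K, r = ⟪y, wbar⟫} = 0 ∧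
    ¬ ∃ zz ∈ D, H zz - g ∈ K := by
  obtain ⟨zbar, hzlim⟩ := h.exists_tendsto_primal_succ_sub hne hcl hconv hP hα.le hαPH
  have h_gap {y : E} (hy : y ∈ D) : ‖wbar‖ ^ 2 / α ≤ ⟪H y - g, wbar⟫ :=
    h.norm_sq_div_le_inner_dual_limit hne hcl hconv hP hα hzlim hwlim hy
  have h_pos : 0 < ‖wbar‖ ^ 2 / α := by positivity
  have h_polar {y : F} (hy : y ∈ K) : ⟪y, wbar⟫ ≤ 0 :=
    (real_inner_comm _ _).trans_le (h.dual_limit_mem hwlim y hy)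
  refine ⟨h_pos.trans_le (le_csInf ?_ ?_), IsGreatest.csSup_eq ⟨⟨0, hK, ?_⟩, ?_⟩, ?_⟩
  · exact hne.imp' (fun y => ⟪H y - g, wbar⟫) fun y hy => ⟨y, hy, rfl⟩
  · rintro _ ⟨y, hy, rfl⟩
    exact h_gap hy
  · rw [inner_zero_left]
  · rintro _ ⟨y, hy, rfl⟩
    exact h_polar hy
  · rintro ⟨y, hy, hyK⟩
    exact (h_pos.trans_le (h_gap hy)).not_ge (h_polar hyK)

end Pipg

/-- if the limit `w̄` of consecutive differences of the dual PIPG iterates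
is nonzero, then `⟪w̄, ·⟫ = 0` separates `K` from `{Hz - g | z ∈ D}`, proving primal
infeasibility. -/
theorem stmt6 {n m : ℕ} (α : ℝ)
    (P : EuclideanSpace ℝ (Fin n) →L[ℝ] EuclideanSpace ℝ (Fin n))
    (hPsa : IsSelfAdjoint P) (hPpsd : ∀ x, 0 ≤ ⟪P x, x⟫)
    (q : EuclideanSpace ℝ (Fin n))
    (H : EuclideanSpace ℝ (Fin n) →L[ℝ] EuclideanSpace ℝ (Fin m))
    (g : EuclideanSpace ℝ (Fin m))
    (D : Set (EuclideanSpace ℝ (Fin n)))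
    (hDne : D.Nonempty) (hDcl : IsClosed D) (hDconv : Convex ℝ D)
    (K : Set (EuclideanSpace ℝ (Fin m)))
    (hKne : K.Nonempty) (hKcl : IsClosed K) (hKconv : Convex ℝ K)
    (hKcone : ∀ w ∈ K, ∀ a : ℝ, 0 ≤ a → a • w ∈ K)
    (w v : ℕ → EuclideanSpace ℝ (Fin m))
    (z : ℕ → EuclideanSpace ℝ (Fin n))
    (hw : ∀ j : ℕ, w (j + 1) = proj (polarCone K) (v j + α • (H (z j) - g)))
    (hz : ∀ j : ℕ, z (j + 1) =
      proj D (z j - α • (P (z j) + q + (ContinuousLinearMap.adjoint H) (w (j + 1)))))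
    (hv : ∀ j : ℕ, v (j + 1) = w (j + 1) + α • H (z (j + 1) - z j))
    (γ lam ν : ℝ) (hγ : 1/2 < γ) (hγ1 : γ < 1)
    (hlam : ‖P‖ ≤ lam) (hν : ‖H‖ ≤ ν) (hα0 : 0 < α)
    (hα : α ≤ (8 - 4/γ) / (Real.sqrt (lam^2 + 16*ν^2) + lam))
    (wbar : EuclideanSpace ℝ (Fin m))
    (hwlim : Tendsto (fun j : ℕ => w (j + 1) - w j) atTop (𝓝 wbar))
    (hwpos : 0 < ‖wbar‖) :
    0 < sInf {r : ℝ | ∃ zz ∈ D, r = ⟪H zz - g, wbar⟫} ∧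
    sSup {r : ℝ | ∃ y ∈ K, r = ⟪y, wbar⟫} = 0 ∧
    ¬ ∃ zz ∈ D, H zz - g ∈ K := by
  have hK0 : (0 : EuclideanSpace ℝ (Fin m)) ∈ K := by
    obtain ⟨k, hk⟩ := hKne
    simpa only [zero_smul] using hKcone k hk 0 le_rfl
  have hP : P.IsPositive := (isPositive_iff' P).2 ⟨hPsa, hPpsd⟩
  have hαPH : (α * ‖H‖) ^ 2 + α * ‖P‖ / 2 < 1 := by
    refine lt_of_le_of_lt ?_ (sq_mul_add_mul_div_two_lt_one (by linarith) hγ1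
      ((norm_nonneg P).trans hlam) hα0 hα)
    gcongr
  exact stmt6_general hP hDne hDcl hDconv hK0 ⟨hw, hz, hv⟩ hα0 hαPH hwlim hwpos
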